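/- Let F be a division ring and n ≥ 1. (1) If the pair (A, v), A ∈ F^{n×n}, v ∈ F^{n×1}, is controllable, then 𝔠_{A,v}^{−1} v = e_1, 𝔠_{A,v}^{−1} A 𝔠_{A,v} = C_ℓ(f), where f(z) := z^n + Σ_{m=0}^{n−1} z^m b_m with (b_0, …, b_{n−1})^T := −𝔠_{A,v}^{−1} A^n v, and moreover {g ∈ F[z] : (vg)^ℓ(A) = 0} = f·F[z] (so f is the minimal polynomial of the pair (A, v)). (2) Dually, if the pair (u, A), u ∈ F^{1×n}, is observable, then u·𝔬_{u,A}^{−1} = e_1^T, 𝔬_{u,A} A 𝔬_{u,A}^{−1} = C_r(q), where q(z) := z^n + Σ_{m=0}^{n−1} c_m z^m with (c_0, …, c_{n−1}) := −u A^n 𝔬_{u,A}^{−1}, and {g ∈ F[z] : (gu)^r(A) = 0} = F[z]·q. -/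

import Mathlib

/-!
Evaluation at `(A, v)` is additive, and `(v (f * zᵏ c))(A) = Aᵏ (v f)(A) c`; hence the polynomials
annihilating `(A, v)` form a right ideal (`leftEval_mul_eq_zero`). On polynomials of degree `< n`
evaluation is multiplication of the coefficient column by the controllability matrix
(`leftEval_eq_ctrbMat_mul`), so controllability says exactly that no nonzero polynomial of degree
`< n` annihilates. Writing `Aⁿ v` in the basis `v, …, Aⁿ⁻¹ v` produces a monic annihilator `f` of
degree `n`, and division with remainder by `f`, with the quotient on the right, shows that `f`
generates. The same relation, read column by column, is `A 𝔠 = 𝔠 C_ℓ(f)`.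

The observable case is symmetric, with left ideals and rows. Its division with remainder has the
quotient on the left, and is obtained from the other one in `Fᵐᵒᵖ[X]`
(`exists_eq_mul_add_of_monic`).
-/

open Polynomial Matrix Finset

section Defs

variable {F : Type*} [DivisionRing F]

/-- The scalar `c` regarded as a `1 × 1` matrix. -/
noncomputable def oneByOne (c : F) : Matrix (Fin 1) (Fin 1) F := Matrix.of fun _ _ => c

/-- Left evaluation `(v f)^{𝔢ℓ}(A) := ∑ⱼ Aʲ v fⱼ` of `f ∈ F[z]` at an input pair `(A, v)`. -/
noncomputable def leftEval {m : Type*} [Fintype m] [DecidableEq m]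
    (A : Matrix m m F) (v : Matrix m (Fin 1) F) (f : F[X]) : Matrix m (Fin 1) F :=
  ∑ j ∈ Finset.range (f.natDegree + 1), A ^ j * v * oneByOne (f.coeff j)

/-- Right evaluation `(f u)^{𝔢r}(A) := ∑ⱼ fⱼ u Aʲ` of `f ∈ F[z]` at an output pair `(u, A)`. -/
noncomputable def rightEval {m : Type*} [Fintype m] [DecidableEq m]
    (u : Matrix (Fin 1) m F) (A : Matrix m m F) (f : F[X]) : Matrix (Fin 1) m F :=
  ∑ j ∈ Finset.range (f.natDegree + 1), oneByOne (f.coeff j) * u * A ^ j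

/-- Controllability matrix `[v, Av, …, A^{n-1} v]`. -/
noncomputable def ctrbMat {n : ℕ} (A : Matrix (Fin n) (Fin n) F)
    (v : Matrix (Fin n) (Fin 1) F) : Matrix (Fin n) (Fin n) F :=
  Matrix.of fun i j => (A ^ (j : ℕ) * v) i 0

/-- Observability matrix with rows `u, uA, …, u A^{n-1}`. -/
noncomputable def obsMat {n : ℕ} (u : Matrix (Fin 1) (Fin n) F)
    (A : Matrix (Fin n) (Fin n) F) : Matrix (Fin n) (Fin n) F :=
  Matrix.of fun i j => (u * A ^ (i : ℕ)) 0 j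

/-- Left companion matrix of a (monic, degree `n`) polynomial: its columns are
`e₂, …, eₙ, -(p₀, …, p_{n-1})ᵀ`. -/
noncomputable def Cl (n : ℕ) (p : F[X]) : Matrix (Fin n) (Fin n) F :=
  Matrix.of fun i j =>
    if (j : ℕ) = n - 1 then -(p.coeff (i : ℕ)) else if (i : ℕ) = (j : ℕ) + 1 then 1 else 0

/-- Right companion matrix: the transpose of the left one. -/
noncomputable def Cr (n : ℕ) (p : F[X]) : Matrix (Fin n) (Fin n) F := (Cl n p)ᵀ

/-- First standard basis column vector of `F^{n×1}`. -/
noncomputable def e1 (F : Type*) [DivisionRing F] (n : ℕ) : Matrix (Fin n) (Fin 1) F :=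
  Matrix.of fun i _ => if (i : ℕ) = 0 then 1 else 0

/-- First standard basis row vector of `F^{1×n}`. -/
noncomputable def e1row (F : Type*) [DivisionRing F] (n : ℕ) : Matrix (Fin 1) (Fin n) F :=
  Matrix.of fun _ j => if (j : ℕ) = 0 then 1 else 0

/-- Two-sided evaluation `(v f u)^{𝔢ts}(A,B) := ∑_{i+j+1 ≤ deg f} Aⁱ v f_{i+j+1} u Bʲ`. -/
noncomputable def tsEval {n k : ℕ} (A : Matrix (Fin n) (Fin n) F) (B : Matrix (Fin k) (Fin k) F)
    (v : Matrix (Fin n) (Fin 1) F) (u : Matrix (Fin 1) (Fin k) F) (f : F[X]) :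
    Matrix (Fin n) (Fin k) F :=
  ∑ i ∈ Finset.range f.natDegree, ∑ j ∈ Finset.range f.natDegree,
    A ^ i * v * oneByOne (f.coeff (i + j + 1)) * u * B ^ j

end Defs

section Aux

variable {F : Type*} [DivisionRing F]

lemma oneByOne_zero : oneByOne (0 : F) = 0 := rfl

lemma oneByOne_one : oneByOne (1 : F) = 1 := by
  ext i j
  obtain rfl := Subsingleton.elim i j
  simp [oneByOne]

lemma oneByOne_add (a b : F) : oneByOne (a + b) = oneByOne a + oneByOne b := rfl

lemma oneByOne_mul (a b : F) : oneByOne (a * b) = oneByOne a * oneByOne b := by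
  ext i j
  simp [oneByOne, Matrix.mul_apply]

/-! ### Polynomials -/

/-- Division with remainder by a monic `q`, with the quotient on the left of `q`. -/
lemma exists_eq_mul_add_of_monic {q : F[X]} (hq : q.Monic) (g : F[X]) :
    ∃ h r : F[X], g = h * q + r ∧ r.degree < q.degree := by
  -- `%ₘ` keeps the quotient on the right, so it is applied in the opposite ring.
  let φ := Polynomial.opRingEquiv F
  have deg : ∀ p : F[X], (φ (MulOpposite.op p)).degree = p.degree := fun p => by
    by_cases hp : p = 0
    · simp [hp]
    · have hp' : φ (MulOpposite.op p) ≠ 0 := by simpa using hp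
      rw [degree_eq_natDegree hp, degree_eq_natDegree hp']
      simp [φ]
  have hQ : (φ (MulOpposite.op q)).Monic := by
    have := hq.leadingCoeff
    simp [φ, Polynomial.Monic, this]
  let G := φ (MulOpposite.op g)
  let Q := φ (MulOpposite.op q)
  have key : G %ₘ Q + Q * (G /ₘ Q) = G := modByMonic_add_div G Q
  refine ⟨(φ.symm (G /ₘ Q)).unop, (φ.symm (G %ₘ Q)).unop, ?_, ?_⟩
  · have := congrArg (fun x => (φ.symm x).unop) key
    simp only [map_add, map_mul, MulOpposite.unop_add, MulOpposite.unop_mul] at this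
    simp only [G, Q, RingEquiv.symm_apply_apply, MulOpposite.unop_op] at this
    rw [add_comm]
    exact this.symm
  · rw [← deg, ← deg, MulOpposite.op_unop, RingEquiv.apply_symm_apply]
    exact degree_modByMonic_lt G hQ

lemma degree_sum_monomial_lt {n : ℕ} (b : Fin n → F) :
    (∑ m : Fin n, monomial (m : ℕ) (b m)).degree < n := by
  simpa only [C_mul_X_pow_eq_monomial] using degree_sum_fin_lt b

lemma coeff_sum_monomial {n : ℕ} (b : Fin n → F) (i : Fin n) :
    (∑ m : Fin n, monomial (m : ℕ) (b m)).coeff i = b i := by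
  simp [coeff_monomial, Fin.val_inj]

lemma coeff_X_pow_add_sum_monomial {n : ℕ} (b : Fin n → F) (i : Fin n) :
    (X ^ n + ∑ m : Fin n, monomial (m : ℕ) (b m)).coeff i = b i := by
  rw [coeff_add, coeff_sum_monomial, coeff_X_pow, if_neg i.2.ne, zero_add]

/-! ### Evaluation at an input pair -/

lemma leftEval_eq_sum_range {n : ℕ} (A : Matrix (Fin n) (Fin n) F) (v : Matrix (Fin n) (Fin 1) F)
    {g : F[X]} {N : ℕ} (hN : g.natDegree < N) :
    leftEval A v g = ∑ j ∈ Finset.range N, A ^ j * v * oneByOne (g.coeff j) := by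
  refine Finset.sum_subset (Finset.range_mono hN) fun j _ hj => ?_
  rw [coeff_eq_zero_of_natDegree_lt (by simpa using hj)]
  simp [oneByOne_zero]

lemma leftEval_add {n : ℕ} (A : Matrix (Fin n) (Fin n) F) (v : Matrix (Fin n) (Fin 1) F)
    (g h : F[X]) : leftEval A v (g + h) = leftEval A v g + leftEval A v h := by
  -- A common length for the three sums.
  have hN : max g.natDegree h.natDegree < max g.natDegree h.natDegree + 1 := Nat.lt_succ_self _
  rw [leftEval_eq_sum_range _ _ ((natDegree_add_le g h).trans_lt hN),
    leftEval_eq_sum_range _ _ ((le_max_left _ _).trans_lt hN),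
    leftEval_eq_sum_range _ _ ((le_max_right _ _).trans_lt hN), ← Finset.sum_add_distrib]
  exact Finset.sum_congr rfl fun j _ => by
    simp only [coeff_add, oneByOne_add, Matrix.mul_add]

lemma leftEval_monomial {n : ℕ} (A : Matrix (Fin n) (Fin n) F) (v : Matrix (Fin n) (Fin 1) F)
    (k : ℕ) (c : F) : leftEval A v (monomial k c) = A ^ k * v * oneByOne c := by
  rw [leftEval_eq_sum_range _ _ ((natDegree_monomial_le c).trans_lt k.lt_succ_self),
    Finset.sum_eq_single_of_mem k (by simp), coeff_monomial_same]
  intro j _ hj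
  rw [coeff_monomial_of_ne _ hj]
  simp [oneByOne_zero]

lemma leftEval_mul_monomial {n : ℕ} (A : Matrix (Fin n) (Fin n) F) (v : Matrix (Fin n) (Fin 1) F)
    (p : F[X]) (k : ℕ) (c : F) :
    leftEval A v (p * monomial k c) = A ^ k * leftEval A v p * oneByOne c := by
  induction p using Polynomial.induction_on' with
  | add p q hp hq => simp only [add_mul, leftEval_add, hp, hq, Matrix.mul_add, Matrix.add_mul]
  | monomial j d =>
    rw [monomial_mul_monomial, leftEval_monomial, leftEval_monomial, oneByOne_mul]
    simp only [add_comm j k, pow_add, Matrix.mul_assoc]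

lemma leftEval_mul_eq_zero {n : ℕ} (A : Matrix (Fin n) (Fin n) F) (v : Matrix (Fin n) (Fin 1) F)
    {p : F[X]} (hp : leftEval A v p = 0) (h : F[X]) : leftEval A v (p * h) = 0 := by
  induction h using Polynomial.induction_on' with
  | add a b ha hb => simp [mul_add, leftEval_add, ha, hb]
  | monomial k c => simp [leftEval_mul_monomial, hp]

lemma leftEval_X_pow {n : ℕ} (A : Matrix (Fin n) (Fin n) F) (v : Matrix (Fin n) (Fin 1) F)
    (k : ℕ) : leftEval A v (X ^ k) = A ^ k * v := by
  rw [X_pow_eq_monomial, leftEval_monomial, oneByOne_one, Matrix.mul_one]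

/-- On polynomials of degree `< n`, evaluation is the linear map given by the
controllability matrix on coefficient columns. -/
lemma leftEval_eq_ctrbMat_mul {n : ℕ} (A : Matrix (Fin n) (Fin n) F) (v : Matrix (Fin n) (Fin 1) F)
    {r : F[X]} (hr : r.degree < n) :
    leftEval A v r = ctrbMat A v * Matrix.of fun (i : Fin n) (_ : Fin 1) => r.coeff (i : ℕ) := by
  have hsum : leftEval A v r = ∑ j ∈ Finset.range n, A ^ j * v * oneByOne (r.coeff j) := by
    by_cases h0 : r = 0
    · simp [h0, leftEval, oneByOne_zero]
    · exact leftEval_eq_sum_range _ _ ((natDegree_lt_iff_degree_lt h0).2 hr)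
  rw [hsum, Finset.sum_range]
  ext i k
  obtain rfl := Subsingleton.elim k 0
  simp [Matrix.sum_apply, Matrix.mul_apply, ctrbMat, oneByOne]

/-! ### Evaluation at an output pair -/

lemma rightEval_eq_sum_range {n : ℕ} (u : Matrix (Fin 1) (Fin n) F) (A : Matrix (Fin n) (Fin n) F)
    {g : F[X]} {N : ℕ} (hN : g.natDegree < N) :
    rightEval u A g = ∑ j ∈ Finset.range N, oneByOne (g.coeff j) * u * A ^ j := by
  refine Finset.sum_subset (Finset.range_mono hN) fun j _ hj => ?_
  rw [coeff_eq_zero_of_natDegree_lt (by simpa using hj)]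
  simp [oneByOne_zero]

lemma rightEval_add {n : ℕ} (u : Matrix (Fin 1) (Fin n) F) (A : Matrix (Fin n) (Fin n) F)
    (g h : F[X]) : rightEval u A (g + h) = rightEval u A g + rightEval u A h := by
  -- A common length for the three sums.
  have hN : max g.natDegree h.natDegree < max g.natDegree h.natDegree + 1 := Nat.lt_succ_self _
  rw [rightEval_eq_sum_range _ _ ((natDegree_add_le g h).trans_lt hN),
    rightEval_eq_sum_range _ _ ((le_max_left _ _).trans_lt hN),
    rightEval_eq_sum_range _ _ ((le_max_right _ _).trans_lt hN), ← Finset.sum_add_distrib]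
  exact Finset.sum_congr rfl fun j _ => by
    simp only [coeff_add, oneByOne_add, Matrix.add_mul]

lemma rightEval_monomial {n : ℕ} (u : Matrix (Fin 1) (Fin n) F) (A : Matrix (Fin n) (Fin n) F)
    (k : ℕ) (c : F) : rightEval u A (monomial k c) = oneByOne c * u * A ^ k := by
  rw [rightEval_eq_sum_range _ _ ((natDegree_monomial_le c).trans_lt k.lt_succ_self),
    Finset.sum_eq_single_of_mem k (by simp), coeff_monomial_same]
  intro j _ hj
  rw [coeff_monomial_of_ne _ hj]
  simp [oneByOne_zero]

lemma rightEval_mul_monomial {n : ℕ} (u : Matrix (Fin 1) (Fin n) F) (A : Matrix (Fin n) (Fin n) F)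
    (p : F[X]) (k : ℕ) (c : F) :
    rightEval u A (monomial k c * p) = oneByOne c * rightEval u A p * A ^ k := by
  induction p using Polynomial.induction_on' with
  | add p q hp hq => simp only [mul_add, rightEval_add, hp, hq, Matrix.mul_add, Matrix.add_mul]
  | monomial j d =>
    rw [monomial_mul_monomial, rightEval_monomial, rightEval_monomial, oneByOne_mul]
    simp only [add_comm k j, pow_add, Matrix.mul_assoc]

lemma rightEval_mul_eq_zero {n : ℕ} (u : Matrix (Fin 1) (Fin n) F) (A : Matrix (Fin n) (Fin n) F)
    {p : F[X]} (hp : rightEval u A p = 0) (h : F[X]) : rightEval u A (h * p) = 0 := by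
  induction h using Polynomial.induction_on' with
  | add a b ha hb => simp [add_mul, rightEval_add, ha, hb]
  | monomial k c => simp [rightEval_mul_monomial, hp]

lemma rightEval_X_pow {n : ℕ} (u : Matrix (Fin 1) (Fin n) F) (A : Matrix (Fin n) (Fin n) F)
    (k : ℕ) : rightEval u A (X ^ k) = u * A ^ k := by
  rw [X_pow_eq_monomial, rightEval_monomial, oneByOne_one, Matrix.one_mul]

/-- On polynomials of degree `< n`, evaluation is the linear map given by the
observability matrix on coefficient rows. -/
lemma rightEval_eq_mul_obsMat {n : ℕ} (u : Matrix (Fin 1) (Fin n) F) (A : Matrix (Fin n) (Fin n) F)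
    {r : F[X]} (hr : r.degree < n) :
    rightEval u A r = (Matrix.of fun (_ : Fin 1) (i : Fin n) => r.coeff (i : ℕ)) * obsMat u A := by
  have hsum : rightEval u A r = ∑ j ∈ Finset.range n, oneByOne (r.coeff j) * u * A ^ j := by
    by_cases h0 : r = 0
    · simp [h0, rightEval, oneByOne_zero]
    · exact rightEval_eq_sum_range _ _ ((natDegree_lt_iff_degree_lt h0).2 hr)
  rw [hsum, Finset.sum_range]
  ext i k
  obtain rfl := Subsingleton.elim i 0
  simp [Matrix.sum_apply, Matrix.mul_apply, obsMat, oneByOne, Matrix.mul_assoc,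
    Finset.mul_sum]

end Aux

/-! ### Companion forms and minimal polynomials -/

/-- Proposition `P:2.15`: a controllable pair `(A, v)` is similar, via the
controllability matrix, to `(C_ℓ(f), e₁)` where `f(z) = zⁿ + ∑ zᵐ bₘ`,
`(b₀,…,b_{n-1})ᵀ = −𝔠_{A,v}⁻¹ Aⁿ v`, and `f` generates the right ideal of polynomials
annihilating `(A,v)`; dually for observable pairs. -/
theorem statement4 {F : Type*} [DivisionRing F] {n : ℕ} (hn : 1 ≤ n) :
    (∀ (A : Matrix (Fin n) (Fin n) F) (v : Matrix (Fin n) (Fin 1) F)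
        (C' : Matrix (Fin n) (Fin n) F),
      ctrbMat A v * C' = 1 → C' * ctrbMat A v = 1 →
      ∀ f : F[X],
        f = X ^ n + ∑ m : Fin n, X ^ (m : ℕ) * Polynomial.C ((-(C' * (A ^ n * v))) m 0) →
        C' * v = e1 F n ∧ C' * A * ctrbMat A v = Cl n f ∧
          ∀ g : F[X], (leftEval A v g = 0 ↔ ∃ h : F[X], g = f * h)) ∧
    (∀ (A : Matrix (Fin n) (Fin n) F) (u : Matrix (Fin 1) (Fin n) F)
        (O' : Matrix (Fin n) (Fin n) F),
      obsMat u A * O' = 1 → O' * obsMat u A = 1 →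
      ∀ q : F[X],
        q = X ^ n + ∑ m : Fin n, Polynomial.C ((-(u * A ^ n * O')) 0 m) * X ^ (m : ℕ) →
        u * O' = e1row F n ∧ obsMat u A * A * O' = Cr n q ∧
          ∀ g : F[X], (rightEval u A g = 0 ↔ ∃ h : F[X], g = h * q)) := by
  refine ⟨?_, ?_⟩
  · intro A v C' hC hC' f hf
    let b : Fin n → F := fun m => (-(C' * (A ^ n * v))) m 0
    replace hf : f = X ^ n + ∑ m : Fin n, monomial (m : ℕ) (b m) := by
      simp only [hf, X_pow_mul_C, C_mul_X_pow_eq_monomial, b]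
    have hdeg := degree_sum_monomial_lt b
    have hmonic : f.Monic := hf ▸ monic_X_pow_add hdeg
    have hfdeg : f.degree = n := by
      rw [hf, degree_add_eq_left_of_degree_lt (by rwa [degree_X_pow]), degree_X_pow]
    have hcoeff : ∀ i : Fin n, f.coeff i = b i := fun i => by
      rw [hf, coeff_X_pow_add_sum_monomial]
    have hb : (Matrix.of fun i (_ : Fin 1) => b i) = -(C' * (A ^ n * v)) := by
      ext i k
      simp [b, Subsingleton.elim k 0]
    have hev : leftEval A v f = 0 := by
      rw [hf, leftEval_add, leftEval_X_pow, leftEval_eq_ctrbMat_mul _ _ hdeg]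
      simp only [coeff_sum_monomial]
      rw [hb, Matrix.mul_neg, ← Matrix.mul_assoc, hC, Matrix.one_mul, add_neg_cancel]
    refine ⟨?_, ?_, fun g => ⟨fun hg => ?_, ?_⟩⟩
    · have hv : v = ctrbMat A v * e1 F n := by
        ext i k
        obtain rfl := Subsingleton.elim k 0
        rw [Matrix.mul_apply, Finset.sum_eq_single (⟨0, hn⟩ : Fin n)]
        · simp [ctrbMat, e1]
        · intro j _ hj
          have : (j : ℕ) ≠ 0 := fun h => hj (Fin.ext h)
          simp [e1, this]
        · simp
      calc C' * v = C' * (ctrbMat A v * e1 F n) := by rw [← hv]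
        _ = e1 F n := by rw [← Matrix.mul_assoc, hC', Matrix.one_mul]
    · have hcomp : A * ctrbMat A v = ctrbMat A v * Cl n f := by
        ext i j
        have hl : (A * ctrbMat A v) i j = (A ^ ((j : ℕ) + 1) * v) i 0 := by
          rw [pow_succ', Matrix.mul_assoc, Matrix.mul_apply (M := A), Matrix.mul_apply (M := A)]
          rfl
        rw [hl, Matrix.mul_apply (M := ctrbMat A v)]
        by_cases hj : (j : ℕ) = n - 1
        · -- The last column expresses `Aⁿ v` in the basis `v, …, Aⁿ⁻¹ v`.
          have h1 : A ^ n * v = ctrbMat A v * (C' * (A ^ n * v)) := by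
            rw [← Matrix.mul_assoc, hC, Matrix.one_mul]
          rw [hj, Nat.sub_add_cancel hn, h1, Matrix.mul_apply (M := ctrbMat A v)]
          simp [Cl, hj, hcoeff, b]
        · have hj' : (j : ℕ) + 1 < n := by omega
          rw [Finset.sum_eq_single (⟨(j : ℕ) + 1, hj'⟩ : Fin n)]
          · simp [ctrbMat, Cl, hj]
          · intro k _ hk
            have : (k : ℕ) ≠ (j : ℕ) + 1 := fun h => hk (Fin.ext h)
            simp [Cl, hj, this]
          · simp
      rw [Matrix.mul_assoc, hcomp, ← Matrix.mul_assoc, hC', Matrix.one_mul]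
    · have hdiv := modByMonic_add_div g f
      have hr : (g %ₘ f).degree < n := hfdeg ▸ degree_modByMonic_lt g hmonic
      have h0 : leftEval A v (g %ₘ f) = 0 := by
        rw [← hdiv, leftEval_add, leftEval_mul_eq_zero _ _ hev, add_zero] at hg
        exact hg
      rw [leftEval_eq_ctrbMat_mul _ _ hr] at h0
      have h1 := congrArg (C' * ·) h0
      simp only [← Matrix.mul_assoc, hC', Matrix.one_mul, Matrix.mul_zero] at h1
      have h2 : g %ₘ f = 0 := by
        ext i
        by_cases hi : i < n
        · exact congrFun (congrFun h1 ⟨i, hi⟩) 0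
        · exact coeff_eq_zero_of_degree_lt (hr.trans_le (by exact_mod_cast not_lt.1 hi))
      exact ⟨g /ₘ f, by rw [h2, zero_add] at hdiv; exact hdiv.symm⟩
    · rintro ⟨h, rfl⟩
      exact leftEval_mul_eq_zero _ _ hev h
  · intro A u O' hO hO' q hq
    let b : Fin n → F := fun m => (-(u * A ^ n * O')) 0 m
    replace hq : q = X ^ n + ∑ m : Fin n, monomial (m : ℕ) (b m) := by
      simp only [hq, C_mul_X_pow_eq_monomial, b]
    have hdeg := degree_sum_monomial_lt b
    have hmonic : q.Monic := hq ▸ monic_X_pow_add hdeg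
    have hqdeg : q.degree = n := by
      rw [hq, degree_add_eq_left_of_degree_lt (by rwa [degree_X_pow]), degree_X_pow]
    have hcoeff : ∀ i : Fin n, q.coeff i = b i := fun i => by
      rw [hq, coeff_X_pow_add_sum_monomial]
    have hb : (Matrix.of fun (_ : Fin 1) i => b i) = -(u * A ^ n * O') := by
      ext k i
      simp [b, Subsingleton.elim k 0]
    have hev : rightEval u A q = 0 := by
      rw [hq, rightEval_add, rightEval_X_pow, rightEval_eq_mul_obsMat _ _ hdeg]
      simp only [coeff_sum_monomial]
      rw [hb, Matrix.neg_mul, Matrix.mul_assoc _ O', hO', Matrix.mul_one, add_neg_cancel]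
    refine ⟨?_, ?_, fun g => ⟨fun hg => ?_, ?_⟩⟩
    · have hu : u = e1row F n * obsMat u A := by
        ext k i
        obtain rfl := Subsingleton.elim k 0
        rw [Matrix.mul_apply, Finset.sum_eq_single (⟨0, hn⟩ : Fin n)]
        · simp [obsMat, e1row]
        · intro j _ hj
          have : (j : ℕ) ≠ 0 := fun h => hj (Fin.ext h)
          simp [e1row, this]
        · simp
      calc u * O' = e1row F n * obsMat u A * O' := by rw [← hu]
        _ = e1row F n := by rw [Matrix.mul_assoc, hO, Matrix.mul_one]
    · have hcomp : obsMat u A * A = Cr n q * obsMat u A := by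
        ext j i
        have hl : (obsMat u A * A) j i = (u * A ^ ((j : ℕ) + 1)) 0 i := by
          rw [pow_succ, ← Matrix.mul_assoc, Matrix.mul_apply (N := A), Matrix.mul_apply (N := A)]
          rfl
        rw [hl, Matrix.mul_apply (N := obsMat u A)]
        by_cases hj : (j : ℕ) = n - 1
        · -- The last row expresses `u Aⁿ` in the basis `u, …, u Aⁿ⁻¹`.
          have h1 : u * A ^ n = u * A ^ n * O' * obsMat u A := by
            rw [Matrix.mul_assoc _ O', hO', Matrix.mul_one]
          rw [hj, Nat.sub_add_cancel hn, h1, Matrix.mul_apply (N := obsMat u A)]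
          simp [Cr, Cl, hj, hcoeff, b]
        · have hj' : (j : ℕ) + 1 < n := by omega
          rw [Finset.sum_eq_single (⟨(j : ℕ) + 1, hj'⟩ : Fin n)]
          · simp [obsMat, Cr, Cl, hj]
          · intro k _ hk
            have : (k : ℕ) ≠ (j : ℕ) + 1 := fun h => hk (Fin.ext h)
            simp [Cr, Cl, hj, this]
          · simp
      rw [hcomp, Matrix.mul_assoc, hO, Matrix.mul_one]
    · obtain ⟨h, r, rfl, hr⟩ := exists_eq_mul_add_of_monic hmonic g
      rw [hqdeg] at hr
      have h0 : rightEval u A r = 0 := by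
        rwa [rightEval_add, rightEval_mul_eq_zero _ _ hev, zero_add] at hg
      rw [rightEval_eq_mul_obsMat _ _ hr] at h0
      have h1 := congrArg (· * O') h0
      simp only [Matrix.mul_assoc, hO, Matrix.mul_one, Matrix.zero_mul] at h1
      have h2 : r = 0 := by
        ext i
        by_cases hi : i < n
        · exact congrFun (congrFun h1 0) ⟨i, hi⟩
        · exact coeff_eq_zero_of_degree_lt (hr.trans_le (by exact_mod_cast not_lt.1 hi))
      exact ⟨h, by rw [h2, add_zero]⟩
    · rintro ⟨h, rfl⟩
      exact rightEval_mul_eq_zero _ _ hev h
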